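/- (Empty region around a separation line, off case) Suppose (g_n^*) is an optimal configuration with overall channel h^*, and g_n^* = 0 for some element n. Then for every index i, 2·Re(conj(h^*)·F_{n,i}) ≤ −|v_n|². Consequently, if h^* ≠ 0 and v_n ≠ 0, then |v_n| ≤ 2|h^*| and ang(h^*, F_{n,i}) ≥ π/2 + arcsin(|v_n|/(2|h^*|)) for every i. -/

import Mathlib

/-- The angle in `[0,π]` between two nonzero complex numbers regarded as plane vectors:
`ang a b = arccos (Re (a * conj b) / (|a| * |b|))`. -/
noncomputable def ang (a b : ℂ) : ℝ :=
  Real.arccos ((a * (starRingEnd ℂ) b).re / (‖a‖ * ‖b‖))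

/-!
Switching an off element to a state `f` changes the overall channel from `h` to `h + f`, so
optimality gives `‖h + f‖ ≤ ‖h‖`. Expanding the squares turns this into `2⟪h, f⟫ ≤ -‖f‖²`, which
says that the cosine of the angle between `h` and `f` is at most `-‖f‖ / (2‖h‖)`.
-/

open InnerProductGeometry
open scoped InnerProductSpace

/-- A configuration `g` picks a state `g m ∈ S m` for every element `m`; it is optimal for the
direct channel `h₀` if its overall channel `h₀ + ∑ m, g m` is largest in norm among all
configurations. The sets `S m` are arbitrary, and the off state is just the element `0` of `S m`. -/
structure IsOptimalConfiguration {ι E : Type*} [Fintype ι] [SeminormedAddCommGroup E]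
    (S : ι → Set E) (h₀ : E) (g : ι → E) : Prop where
  mem : ∀ m, g m ∈ S m
  norm_le : ∀ g' : ι → E, (∀ m, g' m ∈ S m) → ‖h₀ + ∑ m, g' m‖ ≤ ‖h₀ + ∑ m, g m‖

section Seminormed

variable {E : Type*} [SeminormedAddCommGroup E]

theorem IsOptimalConfiguration.norm_add_sub_le {ι : Type*} [Fintype ι] {S : ι → Set E} {h₀ : E}
    {g : ι → E} (hg : IsOptimalConfiguration S h₀ g) {n : ι} {f : E} (hf : f ∈ S n) :
    ‖h₀ + ∑ m, g m + (f - g n)‖ ≤ ‖h₀ + ∑ m, g m‖ := by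
  classical
  have update_mem : ∀ m, Function.update g n f m ∈ S m :=
    (Function.forall_update_iff g fun m x => x ∈ S m).2 ⟨hf, fun m _ => hg.mem m⟩
  have sum_update : ∑ m, Function.update g n f m = ∑ m, g m + (f - g n) := by
    rw [Finset.sum_update_of_mem (Finset.mem_univ n),
      Finset.sum_eq_add_sum_sdiff_singleton_of_mem (Finset.mem_univ n) g]
    abel
  simpa only [sum_update, add_assoc] using hg.norm_le _ update_mem

theorem norm_le_two_mul_norm_of_norm_add_le {h f : E} (hle : ‖h + f‖ ≤ ‖h‖) :
    ‖f‖ ≤ 2 * ‖h‖ := by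
  have triangle : ‖f‖ ≤ ‖h + f‖ + ‖h‖ := by simpa using norm_sub_le (h + f) h
  linarith

theorem norm_add_le_norm_left_iff_two_mul_inner_le [InnerProductSpace ℝ E] {h f : E} :
    ‖h + f‖ ≤ ‖h‖ ↔ 2 * ⟪h, f⟫_ℝ ≤ -‖f‖ ^ 2 := by
  rw [← sq_le_sq₀ (norm_nonneg _) (norm_nonneg _), norm_add_sq_real]
  constructor <;> intro <;> linarith

end Seminormed

section Angle

variable {E : Type*} [NormedAddCommGroup E] [InnerProductSpace ℝ E]

theorem pi_div_two_add_arcsin_le_angle_of_two_mul_inner_le {h f : E} (hh : h ≠ 0) (hf : f ≠ 0)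
    (hle : 2 * ⟪h, f⟫_ℝ ≤ -‖f‖ ^ 2) :
    Real.pi / 2 + Real.arcsin (‖f‖ / (2 * ‖h‖)) ≤ angle h f := by
  have cos_le : ⟪h, f⟫_ℝ / (‖h‖ * ‖f‖) ≤ -(‖f‖ / (2 * ‖h‖)) := by
    rw [div_le_iff₀ (by positivity)]
    calc ⟪h, f⟫_ℝ ≤ -‖f‖ ^ 2 / 2 := by linarith
      _ = -(‖f‖ / (2 * ‖h‖)) * (‖h‖ * ‖f‖) := by field_simp
  calc Real.pi / 2 + Real.arcsin (‖f‖ / (2 * ‖h‖))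
      = Real.arccos (-(‖f‖ / (2 * ‖h‖))) := by
        rw [Real.arccos, Real.arcsin_neg, sub_neg_eq_add]
    _ ≤ angle h f := Real.arccos_le_arccos cos_le

theorem stmt_13_general {ι : Type*} [Fintype ι] {S : ι → Set E} {h₀ : E} {g : ι → E}
    (hg : IsOptimalConfiguration S h₀ g) {n : ι} (hn : g n = 0) {f : E} (hf : f ∈ S n) :
    2 * ⟪h₀ + ∑ m, g m, f⟫_ℝ ≤ -‖f‖ ^ 2 ∧
    ‖f‖ ≤ 2 * ‖h₀ + ∑ m, g m‖ ∧
    (h₀ + ∑ m, g m ≠ 0 → f ≠ 0 →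
      Real.pi / 2 + Real.arcsin (‖f‖ / (2 * ‖h₀ + ∑ m, g m‖)) ≤ angle (h₀ + ∑ m, g m) f) := by
  have norm_add_le : ‖h₀ + ∑ m, g m + f‖ ≤ ‖h₀ + ∑ m, g m‖ := by
    simpa only [hn, sub_zero] using hg.norm_add_sub_le hf
  have inner_le := norm_add_le_norm_left_iff_two_mul_inner_le.1 norm_add_le
  exact ⟨inner_le, norm_le_two_mul_norm_of_norm_add_le norm_add_le,
    fun hh hf0 => pi_div_two_add_arcsin_le_angle_of_two_mul_inner_le hh hf0 inner_le⟩

end Angle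

theorem ang_eq_angle (a b : ℂ) : ang a b = angle a b := by
  rw [ang, angle, real_inner_comm, Complex.inner]

/-- Empty region around a separation line, off case: if `g n = 0` is optimal then for every
`i`, `2·Re(conj(h^*)·F n i) ≤ −|v n|²`; consequently, if `h^* ≠ 0` and `v n ≠ 0`, then
`|v n| ≤ 2|h^*|` and `ang(h^*, F n i) ≥ π/2 + arcsin(|v n|/(2|h^*|))` for every `i`. -/
theorem stmt_13
    {N K : ℕ} (hN : 0 < N) (hK : 0 < K)
    (h_d : ℂ) (v : Fin N → ℂ) (φ : Fin K → ℝ)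
    (hφinj : Function.Injective φ)
    (hφrange : ∀ i, 0 ≤ φ i ∧ φ i < 2 * Real.pi)
    (F : Fin N → Fin K → ℂ)
    (hF : ∀ m i, F m i = v m * Complex.exp ((φ i : ℂ) * Complex.I))
    (g : Fin N → ℂ)
    (hg : ∀ m, g m = 0 ∨ ∃ i, g m = F m i)
    (hopt : ∀ g' : Fin N → ℂ, (∀ m, g' m = 0 ∨ ∃ i, g' m = F m i) →
      ‖h_d + ∑ m, g' m‖ ≤ ‖h_d + ∑ m, g m‖)
    (n : Fin N) (hn : g n = 0) :
    (∀ i : Fin K,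
      2 * ((starRingEnd ℂ) (h_d + ∑ m, g m) * F n i).re ≤ -(‖v n‖)^2) ∧
    (h_d + ∑ m, g m ≠ 0 → v n ≠ 0 →
      ‖v n‖ ≤ 2 * ‖h_d + ∑ m, g m‖ ∧
      ∀ i : Fin K,
        Real.pi / 2 + Real.arcsin (‖v n‖ / (2 * ‖h_d + ∑ m, g m‖)) ≤
          ang (h_d + ∑ m, g m) (F n i)) := by
  have norm_F (i : Fin K) : ‖F n i‖ = ‖v n‖ := by
    rw [hF, norm_mul, Complex.norm_exp_ofReal_mul_I, mul_one]
  have F_ne_zero (hv : v n ≠ 0) (i : Fin K) : F n i ≠ 0 := by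
    rwa [← norm_ne_zero_iff, norm_F, norm_ne_zero_iff]
  have off_bounds (i : Fin K) := stmt_13_general (S := fun m => {z | z = 0 ∨ ∃ i, z = F m i})
    ⟨hg, hopt⟩ hn (.inr ⟨i, rfl⟩ : F n i = 0 ∨ ∃ j, F n i = F n j)
  simp only [Complex.inner, mul_comm (F n _), norm_F, ← ang_eq_angle] at off_bounds
  exact ⟨fun i => (off_bounds i).1, fun hh hv =>
    ⟨(off_bounds ⟨0, hK⟩).2.1, fun i => (off_bounds i).2.2 hh (F_ne_zero hv i)⟩⟩
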